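/- arXiv:2603.20944 — 2 statements merged into one kernel-verified Lean document; each statement's English description precedes it below -/
import Mathlib

section
/- Let β > 2, ρ > 0, α_N = N^{−ρ}, and 0 < κ < 1/2. Writing S(σ) := ∑_{i∈B₁} σᵢ σ_{i+N/2}, one has uniformly over all admissible (μ₁, μ₂) ∈ A_κ^N: for every δ > 0, limsup_{N→∞} sup_{(μ₁,μ₂)} (1/(α_N N)) | log E_{ν_N^{μ₁,μ₂}}[exp(α_N S)] − (α_N N / 2)·μ₁μ₂ | ≤ δ; in particular log E_{ν_N^{μ₁,μ₂}}[exp(α_N S)] = (α_N N / 2)·μ₁μ₂ + o(α_N N) uniformly over admissible (μ₁,μ₂) ∈ A_κ^N. -/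
open MeasureTheory Filter

noncomputable section

/-- The spin value ±1 associated to a Boolean. -/
def spinVal (s : Bool) : ℝ := if s then 1 else -1

/-- A spin configuration on `N = 2n` sites, split into the two blocks
`B₁` (first component) and `B₂` (second component); the perfect matching
pairs the `i`-th spin of `B₁` with the `i`-th spin of `B₂`. -/
abbrev TwoConf (n : ℕ) := (Fin n → Bool) × (Fin n → Bool)

/-- Block magnetization `m₁(σ) = (2/N) ∑_{i ∈ B₁} σᵢ` with `N = 2n`. -/
def mag1 (n : ℕ) (σ : TwoConf n) : ℝ := (2 / (2 * n : ℝ)) * ∑ i, spinVal (σ.1 i)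

/-- Block magnetization `m₂(σ) = (2/N) ∑_{i ∈ B₂} σᵢ` with `N = 2n`. -/
def mag2 (n : ℕ) (σ : TwoConf n) : ℝ := (2 / (2 * n : ℝ)) * ∑ i, spinVal (σ.2 i)

/-- Membership in the typical set `A_κ^N ⊆ [−1,1]²`: the union over sign choices
`s₁, s₂ ∈ {+,−}` of the open squares of half-width `N^{−κ}` centered at
`(m^{s₁}(β/2), m^{s₂}(β/2))`, where `mp = m⁺(β/2)` and `m⁻(β/2) = −mp`. -/
def memTyp (mp κ : ℝ) (N : ℕ) (x : ℝ × ℝ) : Prop :=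
  ∃ s₁ s₂ : Bool,
    |x.1 - (if s₁ then mp else -mp)| < (N : ℝ) ^ (-κ) ∧
    |x.2 - (if s₂ then mp else -mp)| < (N : ℝ) ^ (-κ)

/-- The pair `(μ₁, μ₂)` is admissible for system size `N`: both `N(1+μ₁)/4` and
`N(1+μ₂)/4` are natural numbers. -/
def admissible (N : ℕ) (μ₁ μ₂ : ℝ) : Prop :=
  (∃ k : ℕ, (N : ℝ) * (1 + μ₁) / 4 = k) ∧ ∃ k : ℕ, (N : ℝ) * (1 + μ₂) / 4 = k

/-- The probability of the event `A` under the uniform measure `ν_N^{μ₁,μ₂}` on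
`Ω_N(μ₁,μ₂) = {σ : m₁(σ) = μ₁, m₂(σ) = μ₂}` (with `N = 2n`). -/
def nuProb (n : ℕ) (μ₁ μ₂ : ℝ) (A : Set (TwoConf n)) : ℝ :=
  (∑ σ : TwoConf n,
      ({σ : TwoConf n | mag1 n σ = μ₁ ∧ mag2 n σ = μ₂} ∩ A).indicator
        (fun _ => (1 : ℝ)) σ) /
    ∑ σ : TwoConf n,
      {σ : TwoConf n | mag1 n σ = μ₁ ∧ mag2 n σ = μ₂}.indicator (fun _ => (1 : ℝ)) σ

/-- The expectation of `g` under the uniform measure `ν_N^{μ₁,μ₂}` on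
`Ω_N(μ₁,μ₂)` (with `N = 2n`). -/
def nuExp (n : ℕ) (μ₁ μ₂ : ℝ) (g : TwoConf n → ℝ) : ℝ :=
  (∑ σ : TwoConf n, {σ : TwoConf n | mag1 n σ = μ₁ ∧ mag2 n σ = μ₂}.indicator g σ) /
    ∑ σ : TwoConf n,
      {σ : TwoConf n | mag1 n σ = μ₁ ∧ mag2 n σ = μ₂}.indicator (fun _ => (1 : ℝ)) σ

/-!
Encode each block by its set of plus spins, and write `a = α_N`, `n = N / 2`. Under `ν_N^{μ₁,μ₂}`
these are independent uniform subsets `s`, `t` of an `n`-element set with prescribed cardinalities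
`k`, `l`, and `S = n μ₁ μ₂ + 4 (#(s ∩ t) - k l / n)`. For fixed `t` the count `#(s ∩ t)` is
hypergeometric with mean `k l / n`. Hence `E[exp (a (S - n μ₁ μ₂))] ≥ 1`, because `1 + x ≤ exp x`.
Conversely, sampling without replacement has a smaller moment generating function than sampling
with replacement, so Hoeffding's lemma for a Bernoulli variable bounds this expectation by
`exp (2 n a²)`. Therefore `0 ≤ log E[exp (a S)] - a n μ₁ μ₂ ≤ 2 n a²`, which is `o(a n)` once
`a → 0`.
-/

section Hypergeometric

open Finset ProbabilityTheory
open scoped BigOperators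

variable {ι : Type*} [DecidableEq ι] {U t : Finset ι} {k n : ℕ}

lemma descFactorial_mul_pow_le_descFactorial_mul_pow (hkn : k ≤ n) (a : ℕ) :
    k.descFactorial a * n ^ a ≤ n.descFactorial a * k ^ a := by
  induction a with
  | zero => simp
  | succ a ih =>
    have factor_le : (k - a) * n ≤ (n - a) * k := by
      rw [Nat.sub_mul, Nat.sub_mul, mul_comm n k]
      exact Nat.sub_le_sub_left (Nat.mul_le_mul_left a hkn) _
    calc k.descFactorial (a + 1) * n ^ (a + 1)
        = ((k - a) * n) * (k.descFactorial a * n ^ a) := by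
          rw [Nat.descFactorial_succ]; ring
      _ ≤ ((n - a) * k) * (n.descFactorial a * k ^ a) := Nat.mul_le_mul factor_le ih
      _ = n.descFactorial (a + 1) * k ^ (a + 1) := by
          rw [Nat.descFactorial_succ]; ring

lemma choose_sub_mul_descFactorial {a : ℕ} (hak : a ≤ k) :
    (n - a).choose (k - a) * n.descFactorial a = n.choose k * k.descFactorial a := by
  rw [Nat.descFactorial_eq_factorial_mul_choose, Nat.descFactorial_eq_factorial_mul_choose]
  calc (n - a).choose (k - a) * (a.factorial * n.choose a)
      = a.factorial * (n.choose a * (n - a).choose (k - a)) := by ring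
    _ = a.factorial * (n.choose k * k.choose a) := by rw [Nat.choose_mul hak]
    _ = n.choose k * (a.factorial * k.choose a) := by ring

lemma card_filter_superset_mul_pow_le {A : Finset ι} (hk : k ≤ #U) (hA : A ⊆ U) :
    #{s ∈ U.powersetCard k | A ⊆ s} * #U ^ #A ≤ (#U).choose k * k ^ #A := by
  rcases le_or_gt #A k with hAk | hkA
  · rw [card_filter_powersetCard_subset A U k hA hAk]
    refine Nat.le_of_mul_le_mul_right ?_ (Nat.descFactorial_pos.2 (card_le_card hA))
    calc (#U - #A).choose (k - #A) * #U ^ #A * (#U).descFactorial #A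
        = (#U).choose k * (k.descFactorial #A * #U ^ #A) := by
          rw [mul_right_comm, choose_sub_mul_descFactorial hAk, mul_assoc]
      _ ≤ (#U).choose k * ((#U).descFactorial #A * k ^ #A) :=
          Nat.mul_le_mul_left _ (descFactorial_mul_pow_le_descFactorial_mul_pow hk _)
      _ = (#U).choose k * k ^ #A * (#U).descFactorial #A := by ring
  · have no_superset : {s ∈ U.powersetCard k | A ⊆ s} = ∅ :=
      filter_eq_empty_iff.2 fun s hs hAs =>
        hkA.not_ge ((mem_powersetCard.1 hs).2 ▸ card_le_card hAs)
    simp [no_superset]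

lemma expect_ite_subset_le_div_pow {A : Finset ι} (hk : k ≤ #U) (hA : A ⊆ U) :
    𝔼 s ∈ U.powersetCard k, (if A ⊆ s then (1 : ℝ) else 0) ≤ (k / #U : ℝ) ^ #A := by
  have hchoose : (0 : ℝ) < (#U).choose k := mod_cast Nat.choose_pos hk
  have hpow : (0 : ℝ) < (#U : ℝ) ^ #A := by
    have : #A ≤ #U := card_le_card hA
    rcases Nat.eq_zero_or_pos #U with h | h
    · simp [show #A = 0 by omega]
    · positivity
  rw [expect_eq_sum_div_card, sum_boole, card_powersetCard, div_pow,
    div_le_div_iff₀ hchoose hpow, mul_comm (_ ^ _) (_ : ℝ)]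
  exact mod_cast card_filter_superset_mul_pow_le hk hA

lemma card_filter_mem_mul_card {i : ι} (hi : i ∈ U) :
    #{s ∈ U.powersetCard k | i ∈ s} * #U = (#U).choose k * k := by
  cases k with
  | zero => simp
  | succ k =>
    obtain ⟨m, hm⟩ : ∃ m, #U = m + 1 := Nat.exists_eq_add_one.2 (card_pos.2 ⟨i, hi⟩)
    have count :=
      card_filter_powersetCard_subset {i} U (k + 1) (singleton_subset_iff.2 hi) (by simp)
    simp only [singleton_subset_iff, card_singleton, hm, Nat.add_sub_cancel] at count
    rw [count, hm, mul_comm, Nat.add_one_mul_choose_eq]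

lemma expect_card_inter (hk : k ≤ #U) (ht : t ⊆ U) :
    𝔼 s ∈ U.powersetCard k, (#(s ∩ t) : ℝ) = k / #U * #t := by
  rcases t.eq_empty_or_nonempty with rfl | ⟨j, hj⟩
  · simp
  have hchoose : (0 : ℝ) < (#U).choose k := mod_cast Nat.choose_pos hk
  have cardU_pos : (0 : ℝ) < #U := mod_cast card_pos.2 ⟨j, ht hj⟩
  have count (i : ι) (hi : i ∈ t) :
      #{s ∈ U.powersetCard k | i ∈ s} = #{s ∈ U.powersetCard k | j ∈ s} :=
    Nat.eq_of_mul_eq_mul_right (mod_cast cardU_pos)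
      ((card_filter_mem_mul_card (ht hi)).trans (card_filter_mem_mul_card (ht hj)).symm)
  have total : ∑ s ∈ U.powersetCard k, (#(s ∩ t) : ℝ) =
      #t * #{s ∈ U.powersetCard k | j ∈ s} := by
    simp_rw [inter_comm _ t]
    exact mod_cast sum_card_inter count
  have count_mul : (#{s ∈ U.powersetCard k | j ∈ s} * #U : ℝ) = (#U).choose k * k :=
    mod_cast card_filter_mem_mul_card (ht hj)
  rw [expect_eq_sum_div_card, card_powersetCard, total]
  field_simp
  linear_combination #t * count_mul

lemma expect_pow_card_inter_le_of_one_le (hk : k ≤ #U) (ht : t ⊆ U) {r : ℝ} (hr : 1 ≤ r) :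
    𝔼 s ∈ U.powersetCard k, r ^ #(s ∩ t) ≤ (1 + (r - 1) * (k / #U)) ^ #t := by
  have pow_card (u : Finset ι) (c : ℝ) : (1 + c) ^ #u = ∑ A ∈ u.powerset, c ^ #A := by
    simpa using prod_one_add (f := fun _ => c) u
  have expand (s : Finset ι) :
      r ^ #(s ∩ t) = ∑ A ∈ t.powerset, (r - 1) ^ #A * if A ⊆ s then 1 else 0 := by
    have : (s ∩ t).powerset = {A ∈ t.powerset | A ⊆ s} := by
      ext A
      rw [mem_powerset, subset_inter_iff, mem_filter, mem_powerset, and_comm]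
    simp_rw [mul_ite, mul_one, mul_zero]
    rw [← sum_filter, ← this, ← pow_card, add_sub_cancel]
  simp_rw [expand, expect_sum_comm, ← mul_expect]
  rw [pow_card]
  refine sum_le_sum fun A hA => ?_
  rw [mul_pow]
  exact mul_le_mul_of_nonneg_left
    (expect_ite_subset_le_div_pow hk ((mem_powerset.1 hA).trans ht))
    (pow_nonneg (sub_nonneg.2 hr) _)

lemma expect_powersetCard_sdiff (hk : k ≤ #U) (f : Finset ι → ℝ) :
    𝔼 s ∈ U.powersetCard (#U - k), f (U \ s) = 𝔼 s ∈ U.powersetCard k, f s := by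
  refine expect_nbij' (U \ ·) (U \ ·) ?_ ?_ ?_ ?_ fun _ _ => rfl
  all_goals simp only [mem_powersetCard]; rintro s ⟨hsU, hs⟩
  · exact ⟨sdiff_subset, by rw [card_sdiff_of_subset hsU]; omega⟩
  · exact ⟨sdiff_subset, by rw [card_sdiff_of_subset hsU]; omega⟩
  · exact Finset.sdiff_sdiff_eq_self hsU
  · exact Finset.sdiff_sdiff_eq_self hsU

lemma expect_pow_card_inter_le (hk : k ≤ #U) (ht : t ⊆ U) {r : ℝ} (hr : 0 < r) :
    𝔼 s ∈ U.powersetCard k, r ^ #(s ∩ t) ≤ (1 + (r - 1) * (k / #U)) ^ #t := by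
  rcases le_total 1 r with h1 | h1
  · exact expect_pow_card_inter_le_of_one_le hk ht h1
  -- The expansion in powers of `r - 1` alternates in sign; complements replace `r` by `r⁻¹`.
  have pow_sdiff (s : Finset ι) : r ^ #((U \ s) ∩ t) = r ^ #t * r⁻¹ ^ #(s ∩ t) := by
    have card_add : #((U \ s) ∩ t) + #(s ∩ t) = #t := by
      rw [inter_comm, ← inter_sdiff_assoc, inter_eq_left.2 ht, inter_comm s,
        card_sdiff_add_card_inter]
    rw [← card_add, pow_add, inv_pow, mul_inv_cancel_right₀ (pow_ne_zero _ hr.ne')]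
  rw [← expect_powersetCard_sdiff hk]
  simp_rw [pow_sdiff, ← mul_expect]
  calc r ^ #t * 𝔼 s ∈ U.powersetCard (#U - k), r⁻¹ ^ #(s ∩ t)
      ≤ r ^ #t * (1 + (r⁻¹ - 1) * ((#U - k : ℕ) / #U)) ^ #t := by
        gcongr
        exact expect_pow_card_inter_le_of_one_le (Nat.sub_le _ _) ht ((one_le_inv₀ hr).2 h1)
    _ = (1 + (r - 1) * (k / #U)) ^ #t := by
        rw [← mul_pow, Nat.cast_sub hk]
        rcases t.eq_empty_or_nonempty with rfl | ⟨j, hj⟩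
        · simp
        have cardU_pos : (0 : ℝ) < #U := mod_cast card_pos.2 ⟨j, ht hj⟩
        congr 1
        field_simp
        ring

lemma one_add_exp_sub_one_mul_le {p : ℝ} (hp : p ∈ Set.Icc 0 1) (x : ℝ) :
    1 + (Real.exp x - 1) * p ≤ Real.exp (p * x + x ^ 2 / 8) := by
  have hoeffding : p * Real.exp (x * (1 - p)) + (1 - p) * Real.exp (-(x * p)) ≤
      Real.exp (x ^ 2 / 8) := by
    have mgf_le := (hasSubgaussianMGF_of_mem_Icc
      (μ := bernoulliMeasure true false ⟨p, hp⟩) (X := fun b => if b then (1 : ℝ) else 0)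
      (a := 0) (b := 1) (measurable_of_finite _).aemeasurable
      (ae_of_all _ fun b => by cases b <;> simp)).mgf_le x
    simp only [mgf, integral_bernoulliMeasure] at mgf_le
    convert mgf_le using 2
    · simp
    · simp
    · simp only [sub_zero, nnnorm_one]
      push_cast
      ring
  calc 1 + (Real.exp x - 1) * p
      = Real.exp (p * x) * (p * Real.exp (x * (1 - p)) + (1 - p) * Real.exp (-(x * p))) := by
        have exp_top : Real.exp (p * x) * Real.exp (x * (1 - p)) = Real.exp x := by
          rw [← Real.exp_add]; ring_nf
        have exp_bot : Real.exp (p * x) * Real.exp (-(x * p)) = 1 := by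
          rw [← Real.exp_add, ← Real.exp_zero]; ring_nf
        linear_combination -p * exp_top - (1 - p) * exp_bot
    _ ≤ Real.exp (p * x) * Real.exp (x ^ 2 / 8) := by
        gcongr
    _ = Real.exp (p * x + x ^ 2 / 8) := (Real.exp_add _ _).symm

theorem one_le_expect_exp_card_inter_sub (hk : k ≤ #U) (ht : t ⊆ U) (x : ℝ) :
    1 ≤ 𝔼 s ∈ U.powersetCard k, Real.exp (x * (#(s ∩ t) - k / #U * #t)) := by
  have hne : (U.powersetCard k).Nonempty := powersetCard_nonempty.2 hk
  calc (1 : ℝ)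
      = 𝔼 s ∈ U.powersetCard k, (x * (#(s ∩ t) - k / #U * #t) + 1) := by
        rw [expect_add_distrib, ← mul_expect, expect_sub_distrib, expect_card_inter hk ht,
          expect_const hne, expect_const hne, sub_self, mul_zero, zero_add]
    _ ≤ _ := expect_le_expect fun s _ => Real.add_one_le_exp _

theorem expect_exp_card_inter_sub_le (hk : k ≤ #U) (ht : t ⊆ U) (x : ℝ) :
    𝔼 s ∈ U.powersetCard k, Real.exp (x * (#(s ∩ t) - k / #U * #t)) ≤
      Real.exp (#t * (x ^ 2 / 8)) := by
  have hp : (k / #U : ℝ) ∈ Set.Icc 0 1 :=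
    ⟨by positivity, div_le_one_of_le₀ (mod_cast hk) (by positivity)⟩
  set p : ℝ := k / #U
  calc 𝔼 s ∈ U.powersetCard k, Real.exp (x * (#(s ∩ t) - p * #t))
      = (𝔼 s ∈ U.powersetCard k, Real.exp x ^ #(s ∩ t)) * Real.exp (-(#t * (p * x))) := by
        rw [expect_mul]
        refine expect_congr rfl fun s _ => ?_
        rw [← Real.exp_nat_mul, ← Real.exp_add]
        ring_nf
    _ ≤ (1 + (Real.exp x - 1) * p) ^ #t * Real.exp (-(#t * (p * x))) := by
        gcongr
        exact expect_pow_card_inter_le hk ht (Real.exp_pos x)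
    _ ≤ Real.exp (p * x + x ^ 2 / 8) ^ #t * Real.exp (-(#t * (p * x))) := by
        gcongr
        · nlinarith [Real.exp_pos x, hp.1, hp.2]
        · exact one_add_exp_sub_one_mul_le hp x
    _ = Real.exp (#t * (x ^ 2 / 8)) := by
        rw [← Real.exp_nat_mul, ← Real.exp_add]
        ring_nf

end Hypergeometric

section Spins

open Finset

variable {ι : Type*} [Fintype ι]

/-- The set of sites carrying a plus spin; it encodes a one-block configuration as a subset. -/
def plusSet (x : ι → Bool) : Finset ι := {i | x i}

lemma sum_spinVal (x : ι → Bool) :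
    ∑ i, spinVal (x i) = 2 * #(plusSet x) - Fintype.card ι := by
  have spinVal_eq (b : Bool) : spinVal b = 2 * (if b then 1 else 0) - 1 := by
    cases b <;> norm_num [spinVal]
  simp_rw [spinVal_eq, sum_sub_distrib, ← mul_sum]
  simp [plusSet]

lemma sum_spinVal_mul_spinVal [DecidableEq ι] (x y : ι → Bool) :
    ∑ i, spinVal (x i) * spinVal (y i) =
      4 * #(plusSet x ∩ plusSet y) - 2 * #(plusSet x) - 2 * #(plusSet y) + Fintype.card ι := by
  have spinVal_mul (b c : Bool) : spinVal b * spinVal c =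
      4 * (if b ∧ c then 1 else 0) - 2 * (if b then 1 else 0) - 2 * (if c then 1 else 0) + 1 := by
    cases b <;> cases c <;> norm_num [spinVal]
  simp_rw [spinVal_mul, sum_add_distrib, sum_sub_distrib, ← mul_sum, plusSet, ← filter_and]
  simp

end Spins

section FixedMagnetization

open Finset
open scoped BigOperators

variable {n k l : ℕ} {μ₁ μ₂ : ℝ}

lemma expect_filter_card_plusSet {ι : Type*} [Fintype ι] [DecidableEq ι] (k : ℕ)
    (f : Finset ι → ℝ) :
    𝔼 x : ι → Bool with #(plusSet x) = k, f (plusSet x) = 𝔼 s ∈ powersetCard k univ, f s := by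
  refine expect_nbij' plusSet (fun s i => decide (i ∈ s)) ?_ ?_ ?_ ?_ fun _ _ => rfl
  · simp
  · intro s hs
    rw [mem_filter]
    simpa [plusSet] using hs
  · simp [plusSet]
  · simp [plusSet]

lemma nuExp_eq_expect (n : ℕ) (μ₁ μ₂ : ℝ) (g : TwoConf n → ℝ) :
    nuExp n μ₁ μ₂ g = 𝔼 σ with mag1 n σ = μ₁ ∧ mag2 n σ = μ₂, g σ := by
  classical
  simp [nuExp, expect_eq_sum_div_card, Set.indicator_apply, sum_filter]

lemma magnetization_eq_iff (hn : 0 < n) {μ : ℝ} (hk : ((2 * n : ℕ) : ℝ) * (1 + μ) / 4 = k)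
    (x : Fin n → Bool) :
    2 / (2 * n : ℝ) * ∑ i, spinVal (x i) = μ ↔ #(plusSet x) = k := by
  rw [sum_spinVal, Fintype.card_fin, ← Nat.cast_inj (R := ℝ), ← hk]
  push_cast
  field_simp
  constructor <;> intro h <;> linarith

lemma nuExp_plusSet (hn : 0 < n) (hk : ((2 * n : ℕ) : ℝ) * (1 + μ₁) / 4 = k)
    (hl : ((2 * n : ℕ) : ℝ) * (1 + μ₂) / 4 = l) (f : Finset (Fin n) → Finset (Fin n) → ℝ) :
    nuExp n μ₁ μ₂ (fun σ => f (plusSet σ.1) (plusSet σ.2)) =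
      𝔼 t ∈ powersetCard l univ, 𝔼 s ∈ powersetCard k univ, f s t := by
  have conf_eq : ({σ : TwoConf n | mag1 n σ = μ₁ ∧ mag2 n σ = μ₂} : Finset (TwoConf n)) =
      ({x | #(plusSet x) = k} : Finset (Fin n → Bool)) ×ˢ
        ({y | #(plusSet y) = l} : Finset (Fin n → Bool)) := by
    ext σ
    simp [mag1, mag2, magnetization_eq_iff hn hk, magnetization_eq_iff hn hl]
  rw [nuExp_eq_expect, conf_eq, expect_product, expect_comm]
  rw [← expect_filter_card_plusSet l fun t => 𝔼 s ∈ powersetCard k univ, f s t]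
  exact expect_congr rfl fun y _ => expect_filter_card_plusSet k (f · (plusSet y))

lemma nuExp_exp_overlap (hn : 0 < n) (hk : ((2 * n : ℕ) : ℝ) * (1 + μ₁) / 4 = k)
    (hl : ((2 * n : ℕ) : ℝ) * (1 + μ₂) / 4 = l) (a : ℝ) :
    nuExp n μ₁ μ₂ (fun σ => Real.exp (a * ∑ i, spinVal (σ.1 i) * spinVal (σ.2 i))) =
      Real.exp (a * n * (μ₁ * μ₂)) *
        𝔼 t ∈ powersetCard l univ, 𝔼 s ∈ powersetCard k (univ : Finset (Fin n)),
          Real.exp (4 * a * (#(s ∩ t) - k / n * #t)) := by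
  simp_rw [sum_spinVal_mul_spinVal, Fintype.card_fin]
  rw [nuExp_plusSet hn hk hl
    (fun s t => Real.exp (a * (4 * #(s ∩ t) - 2 * #s - 2 * #t + n))), mul_expect]
  refine expect_congr rfl fun t ht => ?_
  rw [mul_expect]
  refine expect_congr rfl fun s hs => ?_
  rw [(mem_powersetCard.1 hs).2, (mem_powersetCard.1 ht).2, ← Real.exp_add]
  have hμ₁ : μ₁ = 2 * k / n - 1 := by rw [← hk]; push_cast; field_simp; ring
  have hμ₂ : μ₂ = 2 * l / n - 1 := by rw [← hl]; push_cast; field_simp; ring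
  congr 1
  rw [hμ₁, hμ₂]
  field_simp
  ring

lemma plus_count_le {μ : ℝ} (hμ : μ ≤ 1) (hk : ((2 * n : ℕ) : ℝ) * (1 + μ) / 4 = k) : k ≤ n := by
  rw [← Nat.cast_le (α := ℝ), ← hk]
  push_cast
  nlinarith [n.cast_nonneg (α := ℝ)]

theorem log_nuExp_exp_overlap_sub_mem_Icc (hn : 0 < n) (hμ₁ : μ₁ ≤ 1) (hμ₂ : μ₂ ≤ 1)
    (hadm : admissible (2 * n) μ₁ μ₂) (a : ℝ) :
    Real.log (nuExp n μ₁ μ₂ fun σ => Real.exp (a * ∑ i, spinVal (σ.1 i) * spinVal (σ.2 i))) -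
      a * n * (μ₁ * μ₂) ∈ Set.Icc 0 (2 * n * a ^ 2) := by
  obtain ⟨⟨k, hk⟩, ⟨l, hl⟩⟩ := hadm
  have hkn : k ≤ #(univ : Finset (Fin n)) := by simpa using plus_count_le hμ₁ hk
  have hln : l ≤ #(univ : Finset (Fin n)) := by simpa using plus_count_le hμ₂ hl
  have hne : (powersetCard l (univ : Finset (Fin n))).Nonempty := powersetCard_nonempty.2 hln
  rw [nuExp_exp_overlap hn hk hl]
  set W := 𝔼 t ∈ powersetCard l univ, 𝔼 s ∈ powersetCard k (univ : Finset (Fin n)),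
    Real.exp (4 * a * (#(s ∩ t) - k / n * #t))
  have one_le : 1 ≤ W := le_expect hne fun t _ => by
    simpa using one_le_expect_exp_card_inter_sub hkn (subset_univ t) (4 * a)
  have le_exp : W ≤ Real.exp (2 * n * a ^ 2) := expect_le hne fun t _ => by
    have card_le : (#t : ℝ) ≤ n := mod_cast card_finset_fin_le t
    calc 𝔼 s ∈ powersetCard k univ, Real.exp (4 * a * (#(s ∩ t) - k / n * #t))
        ≤ Real.exp (#t * ((4 * a) ^ 2 / 8)) := by
          simpa using expect_exp_card_inter_sub_le hkn (subset_univ t) (4 * a)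
      _ ≤ Real.exp (n * ((4 * a) ^ 2 / 8)) := by gcongr
      _ = Real.exp (2 * n * a ^ 2) := by ring_nf
  have W_pos : 0 < W := one_pos.trans_le one_le
  rw [Real.log_mul (Real.exp_ne_zero _) W_pos.ne', Real.log_exp, add_sub_cancel_left]
  exact ⟨Real.log_nonneg one_le, (Real.log_le_iff_le_exp W_pos).2 le_exp⟩

end FixedMagnetization

section Asymptotics

open Topology

lemma tendsto_two_mul_rpow_neg {r : ℝ} (hr : 0 < r) :
    Tendsto (fun n : ℕ => ((2 * n : ℕ) : ℝ) ^ (-r)) atTop (𝓝 0) :=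
  ((tendsto_rpow_neg_atTop hr).comp tendsto_natCast_atTop_atTop).comp
    (tendsto_id.const_mul_atTop' two_pos)

lemma le_one_of_abs_sub_sign_lt {m μ ε : ℝ} {s : Bool} (hε : |m| + ε ≤ 1)
    (h : |μ - (if s then m else -m)| < ε) : μ ≤ 1 := by
  have center_le : (if s then m else -m) ≤ |m| := by
    cases s
    · exact neg_le_abs m
    · exact le_abs_self m
  linarith [(abs_lt.1 h).2]

lemma eventually_le_one_of_memTyp {m κ : ℝ} (hm : |m| < 1) (hκ : 0 < κ) :
    ∀ᶠ n : ℕ in atTop, ∀ μ₁ μ₂ : ℝ, memTyp m κ (2 * n) (μ₁, μ₂) → μ₁ ≤ 1 ∧ μ₂ ≤ 1 := by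
  filter_upwards [(tendsto_two_mul_rpow_neg hκ).eventually_lt_const (sub_pos.2 hm)] with n hn
  rintro μ₁ μ₂ ⟨s₁, s₂, h₁, h₂⟩
  exact ⟨le_one_of_abs_sub_sign_lt (by linarith) h₁, le_one_of_abs_sub_sign_lt (by linarith) h₂⟩

theorem tilted_expectation_uniform_general {α : ℕ → ℝ} (hα : Tendsto α atTop (𝓝 0))
    {δ : ℝ} (hδ : 0 < δ) :
    ∀ᶠ n : ℕ in atTop, ∀ μ₁ μ₂ : ℝ, μ₁ ≤ 1 → μ₂ ≤ 1 → admissible (2 * n) μ₁ μ₂ →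
      |Real.log (nuExp n μ₁ μ₂ fun σ =>
            Real.exp (α (2 * n) * ∑ i, spinVal (σ.1 i) * spinVal (σ.2 i))) -
          α (2 * n) * ((2 * n : ℕ) : ℝ) / 2 * (μ₁ * μ₂)| ≤
        δ * (|α (2 * n)| * ((2 * n : ℕ) : ℝ)) := by
  have abs_tendsto : Tendsto (fun n => |α (2 * n)|) atTop (𝓝 0) := by
    simpa using (hα.comp (tendsto_id.const_mul_atTop' two_pos)).abs
  filter_upwards [eventually_gt_atTop 0, abs_tendsto.eventually_le_const hδ] with n hn hsmall
  intro μ₁ μ₂ hμ₁ hμ₂ hadm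
  set a := α (2 * n)
  obtain ⟨lower, upper⟩ := log_nuExp_exp_overlap_sub_mem_Icc hn hμ₁ hμ₂ hadm a
  have main_term : a * ((2 * n : ℕ) : ℝ) / 2 * (μ₁ * μ₂) = a * n * (μ₁ * μ₂) := by
    push_cast; ring
  rw [main_term, abs_of_nonneg lower]
  calc _ ≤ 2 * n * a ^ 2 := upper
    _ = |a| * (|a| * (2 * n : ℕ)) := by rw [← sq_abs]; push_cast; ring
    _ ≤ δ * (|a| * (2 * n : ℕ)) := by gcongr

end Asymptotics

/-- Corollary 3.4 (uniform tilted expectation asymptotics): for `β > 2`, `α_N = N^{−ρ}`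
with `ρ > 0`, and `0 < κ < 1/2`, writing `S(σ) = ∑_{i∈B₁} σᵢσ_{i+N/2}`, one has
`log E_{ν_N^{μ₁,μ₂}}[exp(α_N S)] = (α_N N / 2) μ₁μ₂ + o(α_N N)` uniformly over all
admissible `(μ₁, μ₂) ∈ A_κ^N`; equivalently, for every `δ > 0`, eventually in `N` (even)
`|log E[exp(α_N S)] − (α_N N/2) μ₁μ₂| ≤ δ α_N N` for all such pairs. -/
theorem tilted_expectation_uniform (β ρ κ : ℝ) (hβ : 2 < β) (hρ : 0 < ρ)
    (hκ0 : 0 < κ) (hκ : κ < 1 / 2)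
    (mp : ℝ) (hfix : mp = Real.tanh (β / 2 * mp))
    (hmax : ∀ z : ℝ, z = Real.tanh (β / 2 * z) → z ≤ mp)
    (δ : ℝ) (hδ : 0 < δ) :
    ∀ᶠ n : ℕ in atTop,
      ∀ μ₁ μ₂ : ℝ, memTyp mp κ (2 * n) (μ₁, μ₂) → admissible (2 * n) μ₁ μ₂ →
        |Real.log (nuExp n μ₁ μ₂ (fun σ =>
              Real.exp ((((2 * n : ℕ) : ℝ) ^ (-ρ)) *
                ∑ i, spinVal (σ.1 i) * spinVal (σ.2 i)))) -
            (((2 * n : ℕ) : ℝ) ^ (-ρ)) * ((2 * n : ℕ) : ℝ) / 2 * (μ₁ * μ₂)|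
          ≤ δ * ((((2 * n : ℕ) : ℝ) ^ (-ρ)) * ((2 * n : ℕ) : ℝ)) := by
  have hmp : |mp| < 1 := hfix ▸ Real.abs_tanh_lt_one _
  have hα : Tendsto (fun N : ℕ => (N : ℝ) ^ (-ρ)) atTop (nhds 0) :=
    (tendsto_rpow_neg_atTop hρ).comp tendsto_natCast_atTop_atTop
  filter_upwards [tilted_expectation_uniform_general hα hδ, eventually_le_one_of_memTyp hmp hκ0]
    with n hn hle μ₁ μ₂ htyp hadm
  have alpha_nonneg : 0 ≤ ((2 * n : ℕ) : ℝ) ^ (-ρ) := by positivity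
  simpa only [abs_of_nonneg alpha_nonneg] using
    hn μ₁ μ₂ (hle μ₁ μ₂ htyp).1 (hle μ₁ μ₂ htyp).2 hadm

end
end

section
/- Let β > 2, ρ > 0, 0 < κ < 1/2 with 2κ < ρ, and assume α_N·p(N) = N^{−ρ} where p(N) ∈ (0,1] and N·p(N) → ∞. Then μ^ε_{N,α_N,β}((m₁(σ), m₂(σ)) ∉ A_κ^N) → 0 with ε-probability 1 − o(1), i.e. for every η > 0 the P-probability that μ^ε_{N,α_N,β}((m₁,m₂) ∉ A_κ^N) > η tends to 0 as N → ∞ through even integers. -/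
open MeasureTheory Filter

noncomputable section

/-- The diluted Hamiltonian
`H^ε_{N,α,β}(σ) = −(β/(2N))(∑_{i,j∈B₁} σᵢσⱼ + ∑_{i,j∈B₂} σᵢσⱼ)
  − α ∑_{i∈B₁} ε_i σᵢ σ_{i+N/2}` with `N = 2n`. -/
def dilH (n : ℕ) (α β : ℝ) (ε : Fin n → Bool) (σ : TwoConf n) : ℝ :=
  -(β / (2 * (2 * n : ℝ))) *
      ((∑ i, ∑ j, spinVal (σ.1 i) * spinVal (σ.1 j)) +
        ∑ i, ∑ j, spinVal (σ.2 i) * spinVal (σ.2 j))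
    - α * ∑ i, (if ε i then (1 : ℝ) else 0) * (spinVal (σ.1 i) * spinVal (σ.2 i))

/-- The distribution of the magnetization vector `(m₁, m₂)` under the quenched Gibbs
measure `μ^ε_{N,α,β}`, i.e. the pushforward of `μ^ε_{N,α,β}` under `σ ↦ (m₁(σ), m₂(σ))`. -/
def dilMagDist (n : ℕ) (α β : ℝ) (ε : Fin n → Bool) : Measure (ℝ × ℝ) :=
  (∑ σ : TwoConf n, ENNReal.ofReal (Real.exp (-dilH n α β ε σ)))⁻¹ •
    ∑ σ : TwoConf n,
      ENNReal.ofReal (Real.exp (-dilH n α β ε σ)) • Measure.dirac (mag1 n σ, mag2 n σ)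

/-- The probability, under i.i.d. Bernoulli(q) dilution variables `(ε_i)_{i ∈ B₁}`,
of a set `A` of dilution configurations. -/
def bernProb (n : ℕ) (q : ℝ) (A : Set (Fin n → Bool)) : ℝ :=
  ∑ ε : Fin n → Bool, A.indicator (fun ε => ∏ i, if ε i then q else 1 - q) ε

/-!
Conditionally on the dilution `ε`, the interaction between the blocks changes every Gibbs weight by
a factor of at most `exp (|α| ∑ᵢ εᵢ)` in either direction, so any event has at most
`exp (2 |α| ∑ᵢ εᵢ)` times its probability under two independent Curie–Weiss blocks of `n = N / 2`
spins. The functional `Φ x = log cosh (γ x) - γ x² / 2` governs a single block, with `γ = β / 2`: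
linearizing the quadratic energy at `x` gives a product weight of total mass `2ⁿ exp (n Φ x)`, which
is a lower bound for the partition function and an upper bound for the weight of magnetization `x`.
Since `tanh` is concave on the half-line, `Φ x ≤ Φ m - c (|x| - m)²` globally, and as there are only
`n + 1` magnetization values, a deviation of `δ = N ^ (-κ)` from `±m` has probability at most
`(n + 1) exp (-c n δ²)`. The exponent is of order `N ^ (1 - 2 κ)`. By Markov's inequality
`|α| ∑ᵢ εᵢ ≤ n N ^ (d - ρ)` outside an event of probability `N ^ (-d)`, and the interaction is
negligible once `2 κ < ρ - d`.
-/

section ConcaveDerivative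

lemma sub_mul_sub_le_slope_mul_sq {f : ℝ → ℝ} {s : Set ℝ} (hf : ConcaveOn ℝ s f) {a m x : ℝ}
    (ha : a ∈ s) (hm : m ∈ s) (hx : x ∈ s) (ham : a < m) (hax : a ≤ x) :
    (x - m) * (f x - f m) ≤ slope f m a * (x - m) ^ 2 := by
  rcases eq_or_ne x m with rfl | hxm
  · simp
  have hslope : slope f m x ≤ slope f m a := hf.slope_anti hm ⟨ha, ham.ne⟩ ⟨hx, hxm⟩ hax
  calc (x - m) * (f x - f m) = slope f m x * (x - m) ^ 2 := by
        rw [← vsub_eq_sub (f x), ← sub_smul_slope, smul_eq_mul]; ring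
    _ ≤ slope f m a * (x - m) ^ 2 := by gcongr

lemma le_sub_mul_sq_of_sub_mul_deriv_le {F F' : ℝ → ℝ} {a m C x : ℝ}
    (hF : ∀ y, HasDerivAt F (F' y) y) (ham : a ≤ m)
    (hF' : ∀ y, a ≤ y → (y - m) * F' y ≤ -(2 * C) * (y - m) ^ 2) (hx : a ≤ x) :
    F x ≤ F m - C * (x - m) ^ 2 := by
  have hderiv (y : ℝ) :
      HasDerivAt (fun y ↦ F y + C * (y - m) ^ 2) (F' y + 2 * C * (y - m)) y := by
    refine ((hF y).add ((((hasDerivAt_id y).sub_const m).pow 2).const_mul C)).congr_deriv ?_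
    simp only [id_eq, Nat.cast_ofNat, Nat.add_one_sub_one, pow_one, mul_one]
    ring
  have hdiff : Differentiable ℝ fun y ↦ F y + C * (y - m) ^ 2 := fun y ↦
    (hderiv y).differentiableAt
  have hsign (y : ℝ) (hy : a ≤ y) : (y - m) * (F' y + 2 * C * (y - m)) ≤ 0 := by
    linarith [hF' y hy]
  have hmax : IsMaxOn (fun y ↦ F y + C * (y - m) ^ 2) (Set.Ici a) m := by
    refine isMaxOn_Ici_of_deriv hdiff.continuous.continuousAt hdiff.continuous.continuousAt
      hdiff.differentiableOn hdiff.differentiableOn (fun y hy ↦ ?_) (fun y hy ↦ ?_)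
    · rw [(hderiv y).deriv]
      exact nonneg_of_mul_nonpos_right (hsign y hy.1.le) (sub_neg.2 hy.2)
    · rw [(hderiv y).deriv]
      exact nonpos_of_mul_nonpos_right (hsign y (ham.trans hy.le)) (sub_pos.2 hy)
  have := hmax hx
  simp only [Set.mem_ofPred_eq, sub_self] at this
  linarith

lemma exists_le_sub_mul_sq_of_concaveOn_deriv {F F' : ℝ → ℝ} {a m : ℝ}
    (hF : ∀ x, HasDerivAt F (F' x) x) (hF' : ConcaveOn ℝ (Set.Ici 0) F') (h0 : 0 ≤ F' 0)
    (ha : 0 ≤ a) (hFa : 0 < F' a) (ham : a < m) (hFm : F' m = 0) :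
    ∃ c > 0, ∀ x, 0 ≤ x → F x ≤ F m - c * (x - m) ^ 2 := by
  have hm : 0 < m := ha.trans_lt ham
  obtain ⟨C, hC, hslope⟩ : ∃ C > 0, slope F' m a = -(2 * C) := by
    refine ⟨F' a / (m - a) / 2, by have := sub_pos.2 ham; positivity, ?_⟩
    rw [slope_def_field, hFm, ← neg_sub m a, div_neg, sub_zero]
    ring
  have hright (x : ℝ) (hx : a ≤ x) : F x ≤ F m - C * (x - m) ^ 2 := by
    refine le_sub_mul_sq_of_sub_mul_deriv_le hF ham.le (fun y hy ↦ ?_) hx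
    rw [← hslope]
    simpa only [hFm, sub_zero] using sub_mul_sub_le_slope_mul_sq hF' (Set.mem_Ici.2 ha)
      (Set.mem_Ici.2 hm.le) (Set.mem_Ici.2 (ha.trans hy)) ham hy
  have hmono : MonotoneOn F (Set.Icc 0 a) := by
    refine monotoneOn_of_deriv_nonneg (convex_Icc 0 a)
      (fun y _ ↦ (hF y).continuousAt.continuousWithinAt)
      (fun y _ ↦ (hF y).differentiableAt.differentiableWithinAt) fun y hy ↦ ?_
    rw [(hF y).deriv]
    exact (le_min h0 hFa.le).trans (hF'.min_le_of_mem_Icc (Set.mem_Ici.2 le_rfl)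
      (Set.mem_Ici.2 ha) (interior_subset hy))
  refine ⟨C * (m - a) ^ 2 / m ^ 2, by have := sub_pos.2 ham; positivity, fun x hx ↦ ?_⟩
  rcases le_total a x with hax | hxa
  · have hc : C * (m - a) ^ 2 / m ^ 2 ≤ C := by
      rw [div_le_iff₀ (by positivity)]
      gcongr
      linarith
    nlinarith [hright x hax, sq_nonneg (x - m)]
  · have hc : C * (m - a) ^ 2 / m ^ 2 * (x - m) ^ 2 ≤ C * (a - m) ^ 2 := by
      rw [div_mul_eq_mul_div, div_le_iff₀ (by positivity), ← neg_sub a m, neg_sq]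
      gcongr C * _ * ?_
      nlinarith
    linarith [hmono ⟨hx, hxa⟩ ⟨ha, le_rfl⟩ hxa, hright a le_rfl]

end ConcaveDerivative

section Tanh

lemma hasDerivAt_tanh (x : ℝ) : HasDerivAt Real.tanh (Real.cosh x ^ 2)⁻¹ x := by
  have hquot := (Real.hasDerivAt_sinh x).div (Real.hasDerivAt_cosh x) (Real.cosh_pos x).ne'
  rw [show Real.sinh / Real.cosh = Real.tanh from
    funext fun y ↦ (Real.tanh_eq_sinh_div_cosh y).symm] at hquot
  refine hquot.congr_deriv ?_
  rw [← sq, ← sq, Real.cosh_sq_sub_sinh_sq, one_div]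

lemma continuous_tanh : Continuous Real.tanh :=
  continuous_iff_continuousAt.2 fun x ↦ (hasDerivAt_tanh x).continuousAt

lemma concaveOn_tanh : ConcaveOn ℝ (Set.Ici 0) Real.tanh := by
  refine AntitoneOn.concaveOn_of_deriv (convex_Ici 0) continuous_tanh.continuousOn
    (fun x _ ↦ (hasDerivAt_tanh x).differentiableAt.differentiableWithinAt) ?_
  intro x hx y hy hxy
  rw [interior_Ici, Set.mem_Ioi] at hx hy
  have hcosh : Real.cosh x ≤ Real.cosh y := by
    rwa [Real.cosh_le_cosh, abs_of_pos hx, abs_of_pos hy]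
  rw [(hasDerivAt_tanh x).deriv, (hasDerivAt_tanh y).deriv]
  have := Real.cosh_pos x
  gcongr

variable {γ : ℝ}

lemma concaveOn_tanh_mul_sub (hγ : 0 ≤ γ) :
    ConcaveOn ℝ (Set.Ici 0) fun x ↦ Real.tanh (γ * x) - x := by
  refine ConcaveOn.sub ?_ (convexOn_id (convex_Ici 0))
  refine (concaveOn_tanh.comp_linearMap (LinearMap.mul ℝ ℝ γ)).subset (fun x hx ↦ ?_) (convex_Ici 0)
  exact mul_nonneg hγ hx

lemma eventually_lt_tanh_mul (hγ : 1 < γ) : ∀ᶠ x in nhdsWithin 0 (Set.Ioi 0),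
    x < Real.tanh (γ * x) := by
  have hderiv : HasDerivAt (fun x ↦ Real.tanh (γ * x)) γ 0 := by
    refine ((hasDerivAt_tanh (γ * 0)).comp 0 ((hasDerivAt_id (0 : ℝ)).const_mul γ)).congr_deriv ?_
    simp
  have hslope := (hasDerivAt_iff_tendsto_slope.1 hderiv).eventually_const_lt hγ
  filter_upwards [hslope.filter_mono (nhdsGT_le_nhdsNE 0), self_mem_nhdsWithin] with x hx hx0
  rwa [slope_def_field, mul_zero, Real.tanh_zero, sub_zero, sub_zero, one_lt_div hx0] at hx

lemma exists_pos_eq_tanh_mul (hγ : 1 < γ) : ∃ z > 0, z = Real.tanh (γ * z) := by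
  obtain ⟨x, hx, hx0, hx1⟩ :=
    ((eventually_lt_tanh_mul hγ).and (Ioo_mem_nhdsGT (zero_lt_one' ℝ))).exists
  have hcont : Continuous fun z ↦ Real.tanh (γ * z) - z := by
    have := continuous_tanh
    fun_prop
  obtain ⟨z, hz, hfix⟩ := intermediate_value_Icc' hx1.le hcont.continuousOn
    ⟨sub_nonpos.2 (Real.tanh_lt_one _).le, sub_nonneg.2 hx.le⟩
  exact ⟨z, hx0.trans_le hz.1, (sub_eq_zero.1 hfix).symm⟩

end Tanh

section FreeEnergy

/-- The Curie–Weiss variational functional `x ↦ log cosh (γ x) - γ x² / 2` at inverse temperature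
`γ`, i.e. minus the free energy up to normalization; its maximizers are the limit points of the
magnetization. -/
def curieWeissPhi (γ x : ℝ) : ℝ := Real.log (Real.cosh (γ * x)) - γ * x ^ 2 / 2

lemma curieWeissPhi_abs (γ x : ℝ) : curieWeissPhi γ |x| = curieWeissPhi γ x := by
  rcases abs_choice x with h | h <;> simp [h, curieWeissPhi]

lemma hasDerivAt_curieWeissPhi (γ x : ℝ) :
    HasDerivAt (curieWeissPhi γ) (γ * (Real.tanh (γ * x) - x)) x := by
  have hlog := (((hasDerivAt_id x).const_mul γ).cosh).log (Real.cosh_pos (γ * x)).ne'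
  have hsq := ((hasDerivAt_pow 2 x).const_mul γ).div_const 2
  refine (hlog.sub hsq).congr_deriv ?_
  simp only [id_eq, Real.tanh_eq_sinh_div_cosh, Nat.cast_ofNat, Nat.add_one_sub_one, pow_one]
  ring

lemma exists_curieWeissPhi_le_sub_mul_sq {γ m : ℝ} (hγ : 1 < γ) (hm : 0 < m)
    (hfix : m = Real.tanh (γ * m)) :
    ∃ c > 0, ∀ x, curieWeissPhi γ x ≤ curieWeissPhi γ m - c * (|x| - m) ^ 2 := by
  have hγ0 : 0 < γ := one_pos.trans hγ
  obtain ⟨a, ha, ha0, ham⟩ := ((eventually_lt_tanh_mul hγ).and (Ioo_mem_nhdsGT hm)).exists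
  obtain ⟨c, hc, hbound⟩ := exists_le_sub_mul_sq_of_concaveOn_deriv (hasDerivAt_curieWeissPhi γ)
    ((concaveOn_tanh_mul_sub hγ0.le).smul hγ0.le) (by simp) ha0.le
    (mul_pos hγ0 (sub_pos.2 ha)) ham (by rw [← hfix, sub_self, mul_zero])
  refine ⟨c, hc, fun x ↦ ?_⟩
  rw [← curieWeissPhi_abs γ x]
  exact hbound |x| (abs_nonneg x)

end FreeEnergy

section CurieWeiss

variable {n : ℕ}

/-- The magnetization per spin of a single block of `n` spins. -/
def blockMag (τ : Fin n → Bool) : ℝ := (∑ i, spinVal (τ i)) / n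

/-- The unnormalized Curie–Weiss Gibbs weight of a block at inverse temperature `γ`, the energy
being `-γ (∑ᵢ τᵢ)² / (2n)`. -/
def curieWeissWeight (γ : ℝ) (τ : Fin n → Bool) : ℝ :=
  Real.exp (n * (γ * blockMag τ ^ 2 / 2))

/-- The weight obtained from `curieWeissWeight γ` on replacing the quadratic energy by its tangent
at magnetization `x`. It is a product over sites, hence exactly summable. -/
def tangentWeight (γ x : ℝ) (τ : Fin n → Bool) : ℝ :=
  Real.exp (n * (γ * x * blockMag τ - γ * x ^ 2 / 2))

lemma card_mul_blockMag (τ : Fin n → Bool) : n * blockMag τ = ∑ i, spinVal (τ i) := by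
  rcases eq_or_ne n 0 with rfl | hn
  · simp
  · exact mul_div_cancel₀ _ (Nat.cast_ne_zero.2 hn)

lemma curieWeissWeight_pos (γ : ℝ) (τ : Fin n → Bool) : 0 < curieWeissWeight γ τ :=
  Real.exp_pos _

lemma tangentWeight_blockMag (γ : ℝ) (τ : Fin n → Bool) :
    tangentWeight γ (blockMag τ) τ = curieWeissWeight γ τ := by
  rw [tangentWeight, curieWeissWeight]
  ring_nf

lemma tangentWeight_le_curieWeissWeight {γ : ℝ} (hγ : 0 ≤ γ) (x : ℝ) (τ : Fin n → Bool) :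
    tangentWeight γ x τ ≤ curieWeissWeight γ τ := by
  refine Real.exp_le_exp.2 (mul_le_mul_of_nonneg_left ?_ n.cast_nonneg)
  nlinarith [mul_nonneg hγ (sq_nonneg (blockMag τ - x))]

lemma sum_exp_mul_sum_spinVal (s : ℝ) :
    ∑ τ : Fin n → Bool, Real.exp (s * ∑ i, spinVal (τ i)) = (2 * Real.cosh s) ^ n := by
  have hsite : ∑ b : Bool, Real.exp (s * spinVal b) = 2 * Real.cosh s := by
    simp only [Fintype.sum_bool, spinVal, Real.cosh_eq, if_true, Bool.false_eq_true, if_false,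
      mul_one, mul_neg]
    ring
  simp only [Finset.mul_sum, Real.exp_sum]
  rw [← Fintype.prod_sum fun (_ : Fin n) b ↦ Real.exp (s * spinVal b)]
  simp only [hsite, Finset.prod_const, Finset.card_univ, Fintype.card_fin]

lemma sum_tangentWeight (γ x : ℝ) :
    ∑ τ : Fin n → Bool, tangentWeight γ x τ = 2 ^ n * Real.exp (n * curieWeissPhi γ x) := by
  have hsplit (τ : Fin n → Bool) : tangentWeight γ x τ =
      Real.exp (γ * x * ∑ i, spinVal (τ i)) * Real.exp (-(n * (γ * x ^ 2 / 2))) := by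
    rw [tangentWeight, ← card_mul_blockMag, ← Real.exp_add]
    ring_nf
  simp only [hsplit]
  rw [← Finset.sum_mul, sum_exp_mul_sum_spinVal, curieWeissPhi, mul_sub, sub_eq_add_neg,
    Real.exp_add, Real.exp_nat_mul, Real.exp_log (Real.cosh_pos _), mul_pow, mul_assoc]

lemma card_image_blockMag_le (s : Finset (Fin n → Bool)) : (s.image blockMag).card ≤ n + 1 := by
  have hmag (τ : Fin n → Bool) :
      blockMag τ = (2 * (Finset.univ.filter fun i ↦ τ i = true).card - n : ℝ) / n := by
    have hspin (b : Bool) : spinVal b = 2 * (if b = true then 1 else 0) - 1 := by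
      cases b <;> norm_num [spinVal]
    simp only [blockMag, hspin, Finset.sum_sub_distrib, ← Finset.mul_sum, Finset.sum_boole,
      Finset.sum_const, Finset.card_univ, Fintype.card_fin, nsmul_eq_mul, mul_one]
  have hsub : s.image blockMag ⊆
      (Finset.range (n + 1)).image fun k : ℕ ↦ (2 * k - n : ℝ) / n := by
    refine Finset.image_subset_iff.2 fun τ _ ↦ Finset.mem_image.2 ⟨_, ?_, (hmag τ).symm⟩
    exact Finset.mem_range_succ_iff.2 ((Finset.card_le_univ _).trans_eq (Fintype.card_fin n))
  calc (s.image blockMag).card ≤ _ := Finset.card_le_card hsub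
    _ ≤ (Finset.range (n + 1)).card := Finset.card_image_le
    _ = n + 1 := Finset.card_range _

lemma two_pow_mul_exp_le_sum_curieWeissWeight {γ : ℝ} (hγ : 0 ≤ γ) (x : ℝ) :
    2 ^ n * Real.exp (n * curieWeissPhi γ x) ≤ ∑ τ : Fin n → Bool, curieWeissWeight γ τ := by
  rw [← sum_tangentWeight]
  exact Finset.sum_le_sum fun τ _ ↦ tangentWeight_le_curieWeissWeight hγ x τ

lemma sum_curieWeissWeight_le {γ M : ℝ} {s : Finset (Fin n → Bool)}
    (hM : ∀ τ ∈ s, curieWeissPhi γ (blockMag τ) ≤ M) :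
    ∑ τ ∈ s, curieWeissWeight γ τ ≤ (n + 1) * (2 ^ n * Real.exp (n * M)) := by
  have hfiber : ∀ x ∈ s.image blockMag,
      ∑ τ ∈ s with blockMag τ = x, curieWeissWeight γ τ ≤ 2 ^ n * Real.exp (n * M) := by
    intro x hx
    obtain ⟨τ₀, hτ₀, rfl⟩ := Finset.mem_image.1 hx
    calc ∑ τ ∈ s with blockMag τ = blockMag τ₀, curieWeissWeight γ τ
        = ∑ τ ∈ s with blockMag τ = blockMag τ₀, tangentWeight γ (blockMag τ₀) τ := by
          refine Finset.sum_congr rfl fun τ hτ ↦ ?_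
          rw [← (Finset.mem_filter.1 hτ).2, tangentWeight_blockMag]
      _ ≤ ∑ τ, tangentWeight γ (blockMag τ₀) τ :=
          Finset.sum_le_univ_sum_of_nonneg fun τ ↦ (Real.exp_pos _).le
      _ = 2 ^ n * Real.exp (n * curieWeissPhi γ (blockMag τ₀)) := sum_tangentWeight γ _
      _ ≤ 2 ^ n * Real.exp (n * M) := by
          gcongr
          exact hM τ₀ hτ₀
  calc ∑ τ ∈ s, curieWeissWeight γ τ
      = ∑ x ∈ s.image blockMag, ∑ τ ∈ s with blockMag τ = x, curieWeissWeight γ τ :=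
        (Finset.sum_fiberwise_of_maps_to (fun _ ↦ Finset.mem_image_of_mem _) _).symm
    _ ≤ (s.image blockMag).card • (2 ^ n * Real.exp (n * M)) :=
        Finset.sum_le_card_nsmul _ _ _ hfiber
    _ ≤ (n + 1) * (2 ^ n * Real.exp (n * M)) := by
        rw [nsmul_eq_mul]
        gcongr
        exact_mod_cast card_image_blockMag_le s

lemma sum_curieWeissWeight_atypical_le {γ m c δ : ℝ} (hγ : 0 ≤ γ) (hc : 0 ≤ c) (hδ : 0 ≤ δ)
    (hm : ∀ x, curieWeissPhi γ x ≤ curieWeissPhi γ m - c * (|x| - m) ^ 2) :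
    ∑ τ : Fin n → Bool with δ ≤ |(|blockMag τ| - m)|, curieWeissWeight γ τ ≤
      (n + 1) * Real.exp (-(n * (c * δ ^ 2))) * ∑ τ : Fin n → Bool, curieWeissWeight γ τ := by
  have hM : ∀ τ ∈ Finset.univ.filter fun τ : Fin n → Bool ↦ δ ≤ |(|blockMag τ| - m)|,
      curieWeissPhi γ (blockMag τ) ≤ curieWeissPhi γ m - c * δ ^ 2 := by
    intro τ hτ
    have hsq : δ ^ 2 ≤ (|blockMag τ| - m) ^ 2 := by
      rw [← sq_abs (|blockMag τ| - m)]
      exact pow_le_pow_left₀ hδ (Finset.mem_filter.1 hτ).2 2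
    linarith [hm (blockMag τ), mul_le_mul_of_nonneg_left hsq hc]
  calc _ ≤ (n + 1) * (2 ^ n * Real.exp (n * (curieWeissPhi γ m - c * δ ^ 2))) :=
        sum_curieWeissWeight_le hM
    _ = (n + 1) * Real.exp (-(n * (c * δ ^ 2))) * (2 ^ n * Real.exp (n * curieWeissPhi γ m)) := by
        rw [mul_sub, sub_eq_neg_add, Real.exp_add]
        ring
    _ ≤ _ := by
        gcongr
        exact two_pow_mul_exp_le_sum_curieWeissWeight hγ m

end CurieWeiss

section FiniteWeights

variable {X : Type*} [Fintype X]

lemma sum_exp_mul_le_of_abs_le {u w : X → ℝ} {s : Finset X} {K r : ℝ} (hw : ∀ x, 0 ≤ w x)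
    (hu : ∀ x, |u x| ≤ K) (hr : 0 ≤ r) (hs : ∑ x ∈ s, w x ≤ r * ∑ x, w x) :
    ∑ x ∈ s, Real.exp (u x) * w x ≤ Real.exp (2 * K) * r * ∑ x, Real.exp (u x) * w x := by
  have hlower : Real.exp (-K) * ∑ x, w x ≤ ∑ x, Real.exp (u x) * w x := by
    rw [Finset.mul_sum]
    gcongr with x
    · exact hw x
    · exact neg_le_of_abs_le (hu x)
  calc ∑ x ∈ s, Real.exp (u x) * w x ≤ Real.exp K * ∑ x ∈ s, w x := by
        rw [Finset.mul_sum]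
        gcongr with x
        · exact hw x
        · exact le_of_abs_le (hu x)
    _ ≤ Real.exp K * (r * ∑ x, w x) := by gcongr
    _ = Real.exp (2 * K) * r * (Real.exp (-K) * ∑ x, w x) := by
        rw [show K = 2 * K + -K by ring, Real.exp_add]
        ring_nf
    _ ≤ _ := by gcongr

lemma sum_filter_or_mul_le {f : X → ℝ} (hf : ∀ x, 0 ≤ f x) (P : X → Prop) [DecidablePred P] :
    ∑ z : X × X with P z.1 ∨ P z.2, f z.1 * f z.2 ≤ 2 * (∑ x with P x, f x) * ∑ x, f x := by
  have hprod : ∑ z : X × X, ((if P z.1 then f z.1 else 0) * f z.2 +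
      f z.1 * (if P z.2 then f z.2 else 0)) = 2 * (∑ x with P x, f x) * ∑ x, f x := by
    simp only [Finset.sum_add_distrib, Fintype.sum_prod_type, ← Finset.sum_mul_sum,
      Finset.sum_filter]
    ring
  rw [← hprod, Finset.sum_filter]
  refine Finset.sum_le_sum fun z _ ↦ ?_
  have := mul_nonneg (hf z.1) (hf z.2)
  by_cases h1 : P z.1 <;> by_cases h2 : P z.2 <;> simp [h1, h2, this]

end FiniteWeights

section Gibbs

variable {n : ℕ}

/-- The number of active couplings `∑ᵢ εᵢ`. -/
def activeCount (ε : Fin n → Bool) : ℝ := ∑ i, if ε i then 1 else 0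

/-- The interaction `∑ᵢ εᵢ σᵢ σ_{i+N/2}` between the two blocks. -/
def dilutedOverlap (ε : Fin n → Bool) (σ : TwoConf n) : ℝ :=
  ∑ i, (if ε i then (1 : ℝ) else 0) * (spinVal (σ.1 i) * spinVal (σ.2 i))

lemma abs_dilutedOverlap_le (ε : Fin n → Bool) (σ : TwoConf n) :
    |dilutedOverlap ε σ| ≤ activeCount ε := by
  refine (Finset.abs_sum_le_sum_abs _ _).trans (Finset.sum_le_sum fun i _ ↦ ?_)
  unfold spinVal
  split_ifs <;> norm_num

lemma mag1_eq_blockMag (σ : TwoConf n) : mag1 n σ = blockMag σ.1 := by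
  rw [mag1, blockMag, div_mul_eq_mul_div, mul_div_mul_left _ _ two_ne_zero]

lemma mag2_eq_blockMag (σ : TwoConf n) : mag2 n σ = blockMag σ.2 :=
  mag1_eq_blockMag σ.swap

lemma exp_neg_dilH (α β : ℝ) (ε : Fin n → Bool) (σ : TwoConf n) :
    Real.exp (-dilH n α β ε σ) = Real.exp (α * dilutedOverlap ε σ) *
      (curieWeissWeight (β / 2) σ.1 * curieWeissWeight (β / 2) σ.2) := by
  have hpair (τ : Fin n → Bool) :
      ∑ i, ∑ j, spinVal (τ i) * spinVal (τ j) = (n * blockMag τ) ^ 2 := by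
    rw [card_mul_blockMag, sq, Finset.sum_mul_sum]
  have hscale : β / (2 * (2 * n : ℝ)) * (n * n) = n * (β / 2 / 2) := by
    rcases eq_or_ne (n : ℝ) 0 with hn | hn
    · simp [hn]
    · field_simp
  rw [curieWeissWeight, curieWeissWeight, ← Real.exp_add, ← Real.exp_add, dilH, hpair, hpair,
    ← dilutedOverlap]
  congr 1
  linear_combination (blockMag σ.1 ^ 2 + blockMag σ.2 ^ 2) * hscale

lemma dilMagDist_apply (α β : ℝ) (ε : Fin n → Bool) (S : Set (ℝ × ℝ)) [DecidablePred (· ∈ S)] :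
    dilMagDist n α β ε S = ENNReal.ofReal
      ((∑ σ : TwoConf n with (mag1 n σ, mag2 n σ) ∈ S, Real.exp (-dilH n α β ε σ)) /
        ∑ σ : TwoConf n, Real.exp (-dilH n α β ε σ)) := by
  have hpos : 0 < ∑ σ : TwoConf n, Real.exp (-dilH n α β ε σ) :=
    Finset.sum_pos (fun σ _ ↦ Real.exp_pos _) Finset.univ_nonempty
  rw [dilMagDist, Measure.smul_apply, Measure.finsetSum_apply, div_eq_inv_mul,
    ENNReal.ofReal_mul (inv_nonneg.2 hpos.le), ENNReal.ofReal_inv_of_pos hpos,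
    ENNReal.ofReal_sum_of_nonneg fun σ _ ↦ (Real.exp_pos _).le,
    ENNReal.ofReal_sum_of_nonneg fun σ _ ↦ (Real.exp_pos _).le, smul_eq_mul, Finset.sum_filter]
  congr 1
  refine Finset.sum_congr rfl fun σ _ ↦ ?_
  rw [Measure.smul_apply, Measure.dirac_apply, smul_eq_mul]
  by_cases h : (mag1 n σ, mag2 n σ) ∈ S <;> simp [h]

lemma exists_abs_sub_ite_lt {m δ y : ℝ} (hy : |(|y| - m)| < δ) :
    ∃ s : Bool, |y - (if s then m else -m)| < δ := by
  rcases abs_choice y with h | h <;> rw [h] at hy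
  · exact ⟨true, by simpa using hy⟩
  · rw [← abs_neg, neg_sub, sub_neg_eq_add, add_comm] at hy
    exact ⟨false, by simpa using hy⟩

lemma le_abs_abs_sub_of_not_memTyp {m κ : ℝ} {N : ℕ} {x : ℝ × ℝ} (hx : ¬ memTyp m κ N x) :
    (N : ℝ) ^ (-κ) ≤ |(|x.1| - m)| ∨ (N : ℝ) ^ (-κ) ≤ |(|x.2| - m)| := by
  contrapose! hx
  obtain ⟨s₁, h₁⟩ := exists_abs_sub_ite_lt hx.1
  obtain ⟨s₂, h₂⟩ := exists_abs_sub_ite_lt hx.2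
  exact ⟨s₁, s₂, h₁, h₂⟩

lemma sum_curieWeissWeight_mul_atypical_le {γ m c δ : ℝ} {S : Set (ℝ × ℝ)}
    [DecidablePred (· ∈ S)] (hγ : 0 ≤ γ) (hc : 0 ≤ c) (hδ : 0 ≤ δ)
    (hm : ∀ x, curieWeissPhi γ x ≤ curieWeissPhi γ m - c * (|x| - m) ^ 2)
    (hS : ∀ x ∈ S, δ ≤ |(|x.1| - m)| ∨ δ ≤ |(|x.2| - m)|) :
    ∑ σ : TwoConf n with (mag1 n σ, mag2 n σ) ∈ S,
        curieWeissWeight γ σ.1 * curieWeissWeight γ σ.2 ≤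
      2 * (n + 1) * Real.exp (-(n * (c * δ ^ 2))) *
        ∑ σ : TwoConf n, curieWeissWeight γ σ.1 * curieWeissWeight γ σ.2 := by
  have hW (τ : Fin n → Bool) : 0 ≤ curieWeissWeight γ τ := (curieWeissWeight_pos γ τ).le
  have hsub (σ : TwoConf n) (hσ : (mag1 n σ, mag2 n σ) ∈ S) :
      δ ≤ |(|blockMag σ.1| - m)| ∨ δ ≤ |(|blockMag σ.2| - m)| := by
    simpa only [mag1_eq_blockMag, mag2_eq_blockMag] using hS _ hσ
  calc _ ≤ ∑ σ : TwoConf n with δ ≤ |(|blockMag σ.1| - m)| ∨ δ ≤ |(|blockMag σ.2| - m)|,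
          curieWeissWeight γ σ.1 * curieWeissWeight γ σ.2 :=
        Finset.sum_le_sum_of_subset_of_nonneg (Finset.monotone_filter_right _ fun σ _ ↦ hsub σ)
          fun σ _ _ ↦ mul_nonneg (hW _) (hW _)
    _ ≤ _ := sum_filter_or_mul_le hW fun τ ↦ δ ≤ |(|blockMag τ| - m)|
    _ ≤ 2 * ((n + 1) * Real.exp (-(n * (c * δ ^ 2))) *
          ∑ τ : Fin n → Bool, curieWeissWeight γ τ) *
          ∑ τ : Fin n → Bool, curieWeissWeight γ τ := by
        have := Finset.sum_nonneg fun (τ : Fin n → Bool) (_ : τ ∈ Finset.univ) ↦ hW τ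
        gcongr
        exact sum_curieWeissWeight_atypical_le hγ hc hδ hm
    _ = _ := by
        rw [Fintype.sum_prod_type, ← Finset.sum_mul_sum]
        ring

lemma dilMagDist_atypical_le {β m c δ : ℝ} {S : Set (ℝ × ℝ)} (hβ : 0 ≤ β) (hc : 0 ≤ c)
    (hδ : 0 ≤ δ) (hm : ∀ x, curieWeissPhi (β / 2) x ≤ curieWeissPhi (β / 2) m - c * (|x| - m) ^ 2)
    (hS : ∀ x ∈ S, δ ≤ |(|x.1| - m)| ∨ δ ≤ |(|x.2| - m)|) (α : ℝ) (ε : Fin n → Bool) :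
    dilMagDist n α β ε S ≤ ENNReal.ofReal (2 * (n + 1) *
      Real.exp (2 * (|α| * activeCount ε) - n * (c * δ ^ 2))) := by
  classical
  rw [dilMagDist_apply]
  refine ENNReal.ofReal_le_ofReal (div_le_of_le_mul₀ (by positivity) (by positivity) ?_)
  simp only [exp_neg_dilH]
  have hcoupling (σ : TwoConf n) : |α * dilutedOverlap ε σ| ≤ |α| * activeCount ε := by
    rw [abs_mul]
    exact mul_le_mul_of_nonneg_left (abs_dilutedOverlap_le ε σ) (abs_nonneg α)
  have hblocks := sum_curieWeissWeight_mul_atypical_le (n := n) (by linarith) hc hδ hm hS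
  refine (sum_exp_mul_le_of_abs_le
    (fun σ ↦ (mul_pos (curieWeissWeight_pos _ _) (curieWeissWeight_pos _ _)).le) hcoupling
    (by positivity) hblocks).trans_eq ?_
  rw [sub_eq_add_neg, Real.exp_add]
  ring

end Gibbs

section Dilution

variable {n : ℕ} {q : ℝ}

/-- The probability of the dilution configuration `ε` under i.i.d. Bernoulli(`q`) variables. -/
def bernWeight (q : ℝ) (ε : Fin n → Bool) : ℝ := ∏ i, if ε i then q else 1 - q

lemma bernWeight_nonneg (hq : q ∈ Set.Icc 0 1) (ε : Fin n → Bool) : 0 ≤ bernWeight q ε := by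
  refine Finset.prod_nonneg fun i _ ↦ ?_
  split_ifs
  exacts [hq.1, sub_nonneg.2 hq.2]

lemma bernProb_nonneg (hq : q ∈ Set.Icc 0 1) (A : Set (Fin n → Bool)) : 0 ≤ bernProb n q A :=
  Finset.sum_nonneg fun _ _ ↦ Set.indicator_nonneg (fun ε _ ↦ bernWeight_nonneg hq ε) _

lemma bernProb_mul_le_sum (hq : q ∈ Set.Icc 0 1) {A : Set (Fin n → Bool)}
    {f : (Fin n → Bool) → ℝ} {a : ℝ} (hf : ∀ ε, 0 ≤ f ε) (hA : ∀ ε ∈ A, a ≤ f ε) :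
    bernProb n q A * a ≤ ∑ ε, bernWeight q ε * f ε := by
  rw [bernProb, Finset.sum_mul]
  refine Finset.sum_le_sum fun ε _ ↦ ?_
  by_cases h : ε ∈ A
  · rw [Set.indicator_of_mem h]
    exact mul_le_mul_of_nonneg_left (hA ε h) (bernWeight_nonneg hq ε)
  · rw [Set.indicator_of_notMem h, zero_mul]
    exact mul_nonneg (bernWeight_nonneg hq ε) (hf ε)

lemma sum_bernWeight_mul_ite (q : ℝ) (j : Fin n) :
    ∑ ε : Fin n → Bool, bernWeight q ε * (if ε j then 1 else 0) = q := by
  let g : Fin n → Bool → ℝ := fun i b ↦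
    (if b then q else 1 - q) * (if i = j then (if b then 1 else 0) else 1)
  have hfactor (ε : Fin n → Bool) :
      bernWeight q ε * (if ε j then 1 else 0) = ∏ i, g i (ε i) := by
    rw [Finset.prod_mul_distrib, Finset.prod_ite_eq' Finset.univ j, if_pos (Finset.mem_univ j),
      bernWeight]
  have hsite (i : Fin n) : ∑ b, g i b = if i = j then q else 1 := by
    by_cases hij : i = j <;> simp [g, hij]
  simp only [hfactor, ← Fintype.prod_sum, hsite, Finset.prod_ite_eq', Finset.mem_univ, if_true]

lemma sum_bernWeight_mul_activeCount (q : ℝ) :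
    ∑ ε : Fin n → Bool, bernWeight q ε * activeCount ε = n * q := by
  simp only [activeCount, Finset.mul_sum]
  rw [Finset.sum_comm]
  simp only [sum_bernWeight_mul_ite, Finset.sum_const, Finset.card_univ, Fintype.card_fin,
    nsmul_eq_mul]

lemma activeCount_nonneg (ε : Fin n → Bool) : 0 ≤ activeCount ε :=
  Finset.sum_nonneg fun i _ ↦ by split_ifs <;> norm_num

lemma bernProb_mul_le_of_le_activeCount (hq : q ∈ Set.Icc 0 1) {A : Set (Fin n → Bool)}
    {a b : ℝ} (hb : 0 ≤ b) (hA : ∀ ε ∈ A, a ≤ b * activeCount ε) :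
    bernProb n q A * a ≤ n * (b * q) := by
  refine (bernProb_mul_le_sum hq (fun ε ↦ mul_nonneg hb (activeCount_nonneg ε)) hA).trans_eq ?_
  simp only [mul_left_comm _ b, ← Finset.mul_sum, sum_bernWeight_mul_activeCount]

end Dilution

section Asymptotics

lemma tendsto_mul_exp_rpow_sub_rpow {u v c : ℝ} (hu : 0 < u) (hvu : v < u) (hc : 0 < c) :
    Tendsto (fun x : ℝ ↦ x * Real.exp (x ^ v - c * x ^ u)) atTop (nhds 0) := by
  have hlog : ∀ᶠ x : ℝ in atTop, Real.log x ≤ c / 4 * x ^ u := by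
    filter_upwards [(isLittleO_log_rpow_atTop hu).bound (show 0 < c / 4 by positivity),
      eventually_ge_atTop 0] with x hx hx0
    rw [Real.norm_of_nonneg (Real.rpow_nonneg hx0 u)] at hx
    exact (Real.le_norm_self _).trans hx
  have hpow : ∀ᶠ x : ℝ in atTop, x ^ v ≤ c / 4 * x ^ u := by
    filter_upwards [(tendsto_rpow_neg_atTop (sub_pos.2 hvu)).eventually_le_const
      (show 0 < c / 4 by positivity), eventually_gt_atTop 0] with x hx hx0
    calc x ^ v = x ^ (-(u - v)) * x ^ u := by rw [← Real.rpow_add hx0]; ring_nf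
      _ ≤ c / 4 * x ^ u := by gcongr
  have hexponent : Tendsto (fun x : ℝ ↦ Real.log x + (x ^ v - c * x ^ u)) atTop atBot := by
    refine tendsto_atBot_mono' _ ?_
      ((tendsto_rpow_atTop hu).const_mul_atTop_of_neg (show -(c / 2) < 0 by linarith))
    filter_upwards [hlog, hpow] with x h1 h2
    linarith
  refine (Real.tendsto_exp_atBot.comp hexponent).congr' ?_
  filter_upwards [eventually_gt_atTop 0] with x hx
  rw [Function.comp_apply, Real.exp_add, Real.exp_log hx]

lemma tendsto_two_mul_natCast_atTop : Tendsto (fun n : ℕ ↦ ((2 * n : ℕ) : ℝ)) atTop atTop :=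
  tendsto_natCast_atTop_atTop.comp (tendsto_id.const_mul_atTop' two_pos)

lemma tendsto_mul_exp_two_mul_sub {c κ r : ℝ} (hc : 0 < c) (hκ : κ < 1 / 2) (hr : 2 * κ < r) :
    Tendsto (fun n : ℕ ↦ 2 * (n + 1) * Real.exp (2 * (n * ((2 * n : ℕ) : ℝ) ^ (-r)) -
      n * (c * (((2 * n : ℕ) : ℝ) ^ (-κ)) ^ 2))) atTop (nhds 0) := by
  have hlim := ((tendsto_mul_exp_rpow_sub_rpow (u := 1 - 2 * κ) (v := 1 - r) (by linarith)
    (by linarith) (half_pos hc)).comp tendsto_two_mul_natCast_atTop).const_mul 2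
  rw [mul_zero] at hlim
  refine squeeze_zero' (Eventually.of_forall fun n ↦ by positivity) ?_ hlim
  filter_upwards [eventually_ge_atTop 1] with n hn
  have hN : ((2 * n : ℕ) : ℝ) = 2 * n := by push_cast; ring
  have hn1 : (1 : ℝ) ≤ n := Nat.one_le_cast.2 hn
  have hN0 : (0 : ℝ) < 2 * n := by positivity
  have hcoupling : 2 * (n * (2 * n : ℝ) ^ (-r)) = (2 * n : ℝ) ^ (1 - r) := by
    rw [sub_eq_add_neg, Real.rpow_add hN0, Real.rpow_one, mul_assoc]
  have hwindow : n * (c * ((2 * n : ℝ) ^ (-κ)) ^ 2) = c / 2 * (2 * n : ℝ) ^ (1 - 2 * κ) := by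
    rw [sub_eq_add_neg, Real.rpow_add hN0, Real.rpow_one,
      show -(2 * κ) = -κ * (2 : ℕ) by push_cast; ring, Real.rpow_mul_natCast hN0.le]
    ring
  rw [Function.comp_apply, hN, hcoupling, hwindow, ← mul_assoc]
  gcongr
  linarith

end Asymptotics

lemma bernProb_lt_dilMagDist_le {n : ℕ} {q α β κ ρ d m c η : ℝ} (hn : 0 < n)
    (hq : q ∈ Set.Icc 0 1) (hβ : 0 ≤ β) (hc : 0 ≤ c)
    (hm : ∀ x, curieWeissPhi (β / 2) x ≤ curieWeissPhi (β / 2) m - c * (|x| - m) ^ 2)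
    (hα : |α| * q ≤ ((2 * n : ℕ) : ℝ) ^ (-ρ))
    (hη : 2 * (n + 1) * Real.exp (2 * (n * ((2 * n : ℕ) : ℝ) ^ (-(ρ - d))) -
      n * (c * (((2 * n : ℕ) : ℝ) ^ (-κ)) ^ 2)) ≤ η) :
    bernProb n q {ε | ENNReal.ofReal η < dilMagDist n α β ε {x | ¬ memTyp m κ (2 * n) x}} ≤
      ((2 * n : ℕ) : ℝ) ^ (-d) := by
  set N : ℝ := ((2 * n : ℕ) : ℝ)
  have hN : 0 < N := Nat.cast_pos.2 (by lia)
  have hevent : ∀ ε ∈ {ε : Fin n → Bool | ENNReal.ofReal η <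
      dilMagDist n α β ε {x | ¬ memTyp m κ (2 * n) x}},
      n * N ^ (-(ρ - d)) ≤ |α| * activeCount ε := by
    intro ε hε
    by_contra! hlt
    refine (hε.trans_le (dilMagDist_atypical_le hβ hc (by positivity) hm
      (fun x ↦ le_abs_abs_sub_of_not_memTyp) α ε)).not_ge
      (ENNReal.ofReal_le_ofReal (le_trans ?_ hη))
    gcongr
  have hmarkov := bernProb_mul_le_of_le_activeCount hq (abs_nonneg α) hevent
  refine le_of_mul_le_mul_right (hmarkov.trans ?_) (by positivity : 0 < n * N ^ (-(ρ - d)))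
  calc n * (|α| * q) ≤ n * N ^ (-ρ) := by gcongr
    _ = N ^ (-d) * (n * N ^ (-(ρ - d))) := by
        rw [mul_left_comm, ← Real.rpow_add hN]
        ring_nf

theorem diluted_concentration_in_probability_general {β ρ κ m : ℝ} (hβ : 2 < β)
    (hκ : κ < 1 / 2) (hκρ : 2 * κ < ρ)
    (hm : IsGreatest {z : ℝ | z = Real.tanh (β / 2 * z)} m)
    {α p : ℕ → ℝ} (hp : ∀ N, p N ∈ Set.Icc 0 1)
    (hαp : ∀ᶠ N : ℕ in atTop, |α N| * p N ≤ (N : ℝ) ^ (-ρ)) {η : ℝ} (hη : 0 < η) :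
    Tendsto (fun n : ℕ ↦ bernProb n (p (2 * n)) {ε | ENNReal.ofReal η <
      dilMagDist n (α (2 * n)) β ε {x | ¬ memTyp m κ (2 * n) x}}) atTop (nhds 0) := by
  have hγ : 1 < β / 2 := by linarith
  obtain ⟨z, hz0, hz⟩ := exists_pos_eq_tanh_mul hγ
  obtain ⟨c, hc, hquad⟩ := exists_curieWeissPhi_le_sub_mul_sq hγ (hz0.trans_le (hm.2 hz)) hm.1
  obtain ⟨d, hd0, hd⟩ : ∃ d > 0, 2 * κ < ρ - d := ⟨(ρ - 2 * κ) / 2, by linarith, by linarith⟩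
  have hlim : Tendsto (fun n : ℕ ↦ ((2 * n : ℕ) : ℝ) ^ (-d)) atTop (nhds 0) :=
    (tendsto_rpow_neg_atTop hd0).comp tendsto_two_mul_natCast_atTop
  refine squeeze_zero' (Eventually.of_forall fun n ↦ bernProb_nonneg (hp _) _) ?_ hlim
  have hαp' := (tendsto_id.const_mul_atTop' two_pos).eventually hαp
  filter_upwards [(tendsto_mul_exp_two_mul_sub hc hκ hd).eventually_le_const hη, hαp',
    eventually_gt_atTop 0] with n hsmall hα hn
  exact bernProb_lt_dilMagDist_le hn (hp _) (by linarith) hc.le hquad hα hsmall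

/-- Proposition 4.1(1): for `β > 2`, `α_N p(N) = N^{−ρ}` with `ρ > 0`, `2κ < ρ`,
`0 < κ < 1/2` and `N p(N) → ∞`, the quenched Gibbs measure of the complement of the
typical set vanishes with `ε`-probability `1 − o(1)`: for every `η > 0`, the
`P`-probability that `μ^ε_{N,α_N,β}((m₁,m₂) ∉ A_κ^N) > η` tends to `0` as `N → ∞`
through even integers. -/
theorem diluted_concentration_in_probability (β ρ κ : ℝ) (hβ : 2 < β) (hρ : 0 < ρ)
    (hκ0 : 0 < κ) (hκhalf : κ < 1 / 2) (hκρ : 2 * κ < ρ)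
    (mp : ℝ) (hfix : mp = Real.tanh (β / 2 * mp))
    (hmax : ∀ z : ℝ, z = Real.tanh (β / 2 * z) → z ≤ mp)
    (α p : ℕ → ℝ) (hp : ∀ N, p N ∈ Set.Ioc (0 : ℝ) 1)
    (hαp : ∀ N : ℕ, 1 ≤ N → α N * p N = (N : ℝ) ^ (-ρ))
    (hNp : Tendsto (fun N : ℕ => (N : ℝ) * p N) atTop atTop) :
    ∀ η : ℝ, 0 < η →
      Tendsto
        (fun n : ℕ =>
          bernProb n (p (2 * n))
            {ε : Fin n → Bool |
              ENNReal.ofReal η <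
                dilMagDist n (α (2 * n)) β ε {x : ℝ × ℝ | ¬ memTyp mp κ (2 * n) x}})
        atTop (nhds 0) := fun _ hη ↦
  diluted_concentration_in_probability_general hβ hκhalf hκρ ⟨hfix, hmax⟩
    (fun N ↦ Set.Ioc_subset_Icc_self (hp N))
    ((eventually_ge_atTop 1).mono fun N hN ↦ by
      rw [← abs_of_pos (hp N).1, ← abs_mul, hαp N hN, abs_of_nonneg (by positivity)]) hη

end
end
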